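/- arXiv:2402.05705 — 4 statements merged into one kernel-verified Lean document; each statement's English description precedes it below -/
import Mathlib

section
/- Let n ≥ 1 and let W ∈ ℝ^{n×n} satisfy W·𝟏 = 𝟏 and 𝟏ᵀ·W = 𝟏ᵀ. Let J ∈ ℝ^{n×n} be the matrix with all entries equal to 1/n. Then the characteristic polynomials satisfy the identity X · charpoly(W) = (X − 1) · charpoly(W − J) in ℝ[X]. (Equivalently: the spectrum of W − J is obtained from that of W by replacing one eigenvalue 1 with 0.) -/
open Matrix Polynomial

/-- If `W · 𝟏 = 𝟏` and `𝟏ᵀ · W = 𝟏ᵀ`, and `J` is the matrix with all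
entries `1/n`, then `X · charpoly(W) = (X − 1) · charpoly(W − J)`; i.e. the spectrum
of `W − J` is obtained from that of `W` by replacing one eigenvalue `1` with `0`. -/
theorem stmt1 {n : ℕ} (hn : 1 ≤ n) (W : Matrix (Fin n) (Fin n) ℝ)
    (h1 : W *ᵥ (fun _ => (1 : ℝ)) = (fun _ => (1 : ℝ)))
    (h2 : (fun _ => (1 : ℝ)) ᵥ* W = (fun _ => (1 : ℝ)))
    (J : Matrix (Fin n) (Fin n) ℝ) (hJ : ∀ i j, J i j = 1 / n) :
    (X : ℝ[X]) * W.charpoly = (X - 1) * (W - J).charpoly := by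
  have hn0 : (n : ℝ) ≠ 0 := by
    have : n ≠ 0 := by omega
    exact_mod_cast this
  have hWJ : W * J = J := by
    ext i j
    have := congrFun h1 i
    simp only [Matrix.mulVec, dotProduct, mul_one] at this
    simp only [Matrix.mul_apply, hJ, ← Finset.sum_mul, this, one_mul]
  have hdet : ∀ c : ℝ, (1 + c • J).det = 1 + c := by
    intro c
    have hc : c • J = replicateCol Unit (fun _ : Fin n => c / n) *
        replicateRow Unit (fun _ : Fin n => (1 : ℝ)) := by
      ext i j
      simp [Matrix.mul_apply, hJ, div_eq_mul_inv]
    rw [hc, det_one_add_replicateCol_mul_replicateRow]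
    simp only [dotProduct, one_mul, Finset.sum_const, Finset.card_univ, Fintype.card_fin,
      nsmul_eq_mul]
    field_simp
  have key : ((X : ℝ[X]) - C 1) * (X * W.charpoly) =
      (X - C 1) * ((X - 1) * (W - J).charpoly) := by
    apply Polynomial.funext
    intro x
    by_cases hx : x = 1
    · simp [hx]
    have hx' : x - 1 ≠ 0 := sub_ne_zero.2 hx
    have hm : (scalar (Fin n) x - W) * (1 + (x - 1)⁻¹ • J) = scalar (Fin n) x - (W - J) := by
      have : scalar (Fin n) x * J = x • J := by
        ext i j
        simp [Matrix.scalar_apply, Matrix.diagonal_mul]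
      have h3 : (x - 1)⁻¹ • (x • J - J) = J := by
        rw [show x • J - J = (x - 1) • J by rw [sub_smul, one_smul], smul_smul,
          inv_mul_cancel₀ hx', one_smul]
      rw [mul_add, mul_one, Matrix.mul_smul, sub_mul, this, hWJ, h3]
      abel
    have hd := congrArg Matrix.det hm
    rw [det_mul, hdet] at hd
    simp only [eval_mul, eval_sub, eval_X, eval_C, eval_one, Matrix.eval_charpoly]
    rw [← hd]
    field_simp
    ring
  exact mul_left_cancel₀ (Polynomial.X_sub_C_ne_zero 1) key
end

section
/- Let n ≥ 1 and let W ∈ ℝ^{n×n} be symmetric with W·𝟏 = 𝟏, and let J be the n×n matrix with all entries 1/n. Then the following are equivalent: (i) ‖W − J‖₂ < 1; (ii) for every initial vector x ∈ ℝⁿ, the consensus iterates Wᵏ·x converge as k → ∞ to x̄·𝟏, where x̄ = (Σᵢ xᵢ)/n. In particular, if ‖W − J‖₂ ≥ 1 the agents running the consensus protocol do not all converge to the average for every initial condition. -/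
open Matrix

/-- The spectral norm (ℓ2 operator norm) of a real square matrix. -/
noncomputable def specNorm {n : ℕ} (M : Matrix (Fin n) (Fin n) ℝ) : ℝ :=
  ‖Matrix.toEuclideanCLM (𝕜 := ℝ) M‖

open scoped Matrix.Norms.L2Operator in
theorem specNorm_eq_aux {n : ℕ} (M : Matrix (Fin n) (Fin n) ℝ) : specNorm M = ‖M‖ := rfl

theorem tendsto_mulVec_iff_aux {n : ℕ} (A : ℕ → Matrix (Fin n) (Fin n) ℝ)
    (J : Matrix (Fin n) (Fin n) ℝ) :
    (∀ x : Fin n → ℝ, Filter.Tendsto (fun k => A k *ᵥ x) Filter.atTop (nhds (J *ᵥ x))) ↔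
      Filter.Tendsto A Filter.atTop (nhds J) := by
  constructor
  · intro h
    refine tendsto_pi_nhds.2 fun i => tendsto_pi_nhds.2 fun j => ?_
    have := tendsto_pi_nhds.1 (h (Pi.single j 1)) i
    simpa using this
  · intro h x
    have hc : Continuous fun M : Matrix (Fin n) (Fin n) ℝ => M *ᵥ x := by fun_prop
    exact (hc.tendsto J).comp h

open scoped Matrix.Norms.L2Operator in
theorem norm_lt_one_iff_aux {n : ℕ} (M : Matrix (Fin n) (Fin n) ℝ) (hM : Mᵀ = M) :
    ‖M‖ < 1 ↔ Filter.Tendsto (fun k : ℕ => M ^ k) Filter.atTop (nhds 0) := by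
  constructor
  · exact fun h => tendsto_pow_atTop_nhds_zero_of_norm_lt_one h
  · intro h
    have hs : IsSelfAdjoint M := by
      rw [IsSelfAdjoint, Matrix.star_eq_conjTranspose, Matrix.conjTranspose_eq_transpose_of_trivial, hM]
    have h2 := (h.comp (tendsto_pow_atTop_atTop_of_one_lt (show (1 : ℕ) < 2 by norm_num))).norm
    rw [norm_zero] at h2
    by_contra! hc
    obtain ⟨k, hk⟩ := (h2.eventually (gt_mem_nhds one_pos)).exists
    have h3 : ‖M ^ 2 ^ k‖ = ‖M‖ ^ 2 ^ k := by
      have := congrArg NNReal.toReal (hs.nnnorm_pow_two_pow k)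
      simpa using this
    simp only [Function.comp] at hk
    rw [h3] at hk
    exact absurd (one_le_pow₀ hc) (not_le.2 hk)

/-- for a symmetric matrix `W` with `W·𝟏 = 𝟏`, the condition
`‖W − J‖₂ < 1` holds if and only if, for every initial vector `x`, the consensus
iterates `Wᵏ x` converge to the average vector `x̄·𝟏` as `k → ∞`. -/
theorem stmt4 {n : ℕ} (hn : 1 ≤ n) (W : Matrix (Fin n) (Fin n) ℝ)
    (hsym : Wᵀ = W)
    (h1 : W *ᵥ (fun _ => (1 : ℝ)) = (fun _ => (1 : ℝ)))
    (J : Matrix (Fin n) (Fin n) ℝ) (hJ : ∀ i j, J i j = 1 / n) :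
    specNorm (W - J) < 1 ↔
      ∀ x : Fin n → ℝ, Filter.Tendsto (fun k : ℕ => (W ^ k) *ᵥ x)
        Filter.atTop (nhds (fun _ => (∑ i, x i) / n)) := by
  have hn0 : (n : ℝ) ≠ 0 := by positivity
  have hJx : ∀ x : Fin n → ℝ, (fun _ => (∑ i, x i) / n) = J *ᵥ x := by
    intro x
    ext i
    simp only [Matrix.mulVec, dotProduct, hJ, Finset.sum_div]
    exact Finset.sum_congr rfl fun j _ => by ring
  have hJt : Jᵀ = J := by ext i j; simp [hJ]
  have hJJ : J * J = J := by
    ext i j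
    simp [Matrix.mul_apply, hJ]
    field_simp
  have hWJ : W * J = J := by
    ext i j
    have := congrFun h1 i
    simp only [Matrix.mulVec, dotProduct, mul_one] at this
    simp only [Matrix.mul_apply, hJ, ← Finset.sum_mul, this, one_mul]
  have hJW : J * W = J := by
    have := congrArg Matrix.transpose hWJ
    rwa [Matrix.transpose_mul, hsym, hJt] at this
  have hpJ : ∀ k, W ^ k * J = J := by
    intro k
    induction k with
    | zero => simp
    | succ k ih => rw [pow_succ, mul_assoc, hWJ, ih]
  have hpow : ∀ k : ℕ, (W - J) ^ (k + 1) = W ^ (k + 1) - J := by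
    intro k
    induction k with
    | zero => simp
    | succ k ih =>
      rw [pow_succ, ih, sub_mul, mul_sub, mul_sub, hpJ, hJW, hJJ, ← pow_succ]
      simp
  simp only [hJx]
  rw [tendsto_mulVec_iff_aux (fun k => W ^ k) J, specNorm_eq_aux, norm_lt_one_iff_aux _
    (by rw [Matrix.transpose_sub, hsym, hJt]),
    ← Filter.tendsto_add_atTop_iff_nat 1, ← Filter.tendsto_add_atTop_iff_nat (f := fun k => W ^ k) 1]
  simp only [hpow]
  exact tendsto_sub_nhds_zero_iff
end

section
/- Let n ≥ 2, let G be a connected simple graph on Fin n with Laplacian matrix L ∈ ℝ^{n×n}, and let J be the n×n matrix with all entries 1/n. Let S := { μ ∈ ℝ : there exists v ≠ 0 with Σᵢ vᵢ = 0 and L·v = μ·v } be the set of eigenvalues of L with eigenvector orthogonal to 𝟏, and set a := inf S, b := sup S, and q* := 2/(a + b). Then for every q ∈ ℝ, ‖I − q*·L − J‖₂ ≤ ‖I − q·L − J‖₂; moreover ‖I − q*·L − J‖₂ = (b − a)/(b + a) < 1. In other words, the uniform edge weight q* = 2/(λ₂(L) + λₙ(L)) minimizes the SLEM λ over all uniform-weight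 averaging matrices W_q = I − qL, and the resulting matrix guarantees convergence of the averaging consensus. -/
open Matrix

theorem aux_upper {n : ℕ} (M : Matrix (Fin n) (Fin n) ℝ) (hM : M.IsHermitian) (C : ℝ) (hC : 0 ≤ C)
    (h : ∀ (l : ℝ) (w : Fin n → ℝ), w ≠ 0 → M *ᵥ w = l • w → |l| ≤ C) : specNorm M ≤ C := by
  unfold specNorm
  refine ContinuousLinearMap.opNorm_le_bound _ hC fun x => ?_
  have key : ∀ i, inner ℝ (hM.eigenvectorBasis i) (Matrix.toEuclideanCLM (𝕜 := ℝ) M x)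
      = hM.eigenvalues i * inner ℝ (hM.eigenvectorBasis i) x := by
    intro i
    have h1 := hM.mulVec_eigenvectorBasis i
    have hT : Mᵀ = M := by simpa [Matrix.IsHermitian] using hM
    simp only [PiLp.inner_apply, RCLike.inner_apply, conj_trivial, ofLp_toEuclideanCLM]
    have e1 : ∑ j, (M *ᵥ x.ofLp) j * (hM.eigenvectorBasis i).ofLp j
        = (M *ᵥ x.ofLp) ⬝ᵥ (hM.eigenvectorBasis i).ofLp := rfl
    have e2 : ∑ j, x.ofLp j * (hM.eigenvectorBasis i).ofLp j
        = x.ofLp ⬝ᵥ (hM.eigenvectorBasis i).ofLp := rfl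
    rw [e1, e2, dotProduct_comm, dotProduct_mulVec, ← mulVec_transpose, hT, h1, smul_dotProduct,
      dotProduct_comm, smul_eq_mul]
  have hb : ∀ i, |hM.eigenvalues i| ≤ C := by
    intro i
    refine h _ (hM.eigenvectorBasis i).ofLp ?_ (hM.mulVec_eigenvectorBasis i)
    intro h0
    have := hM.eigenvectorBasis.orthonormal.ne_zero i
    exact this (by ext j; simpa using congrFun h0 j)
  refine le_of_sq_le_sq ?_ (by positivity)
  rw [mul_pow, ← hM.eigenvectorBasis.sum_sq_norm_inner_right, 
    ← hM.eigenvectorBasis.sum_sq_norm_inner_right x, Finset.mul_sum]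
  refine Finset.sum_le_sum fun i _ => ?_
  rw [key, norm_mul, mul_pow]
  gcongr
  exact hb i

theorem aux_lower {n : ℕ} (M : Matrix (Fin n) (Fin n) ℝ) (l : ℝ) (w : Fin n → ℝ) (hw : w ≠ 0)
    (h : M *ᵥ w = l • w) : |l| ≤ specNorm M := by
  unfold specNorm
  have h1 := (Matrix.toEuclideanCLM (𝕜 := ℝ) M).le_opNorm (WithLp.toLp 2 w)
  rw [toEuclideanCLM_toLp, h, WithLp.toLp_smul, norm_smul, Real.norm_eq_abs] at h1
  refine le_of_mul_le_mul_right h1 (norm_pos_iff.2 ?_)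
  simpa using hw

/-- for a connected graph with Laplacian `L`, with `a` and `b` the
smallest and largest eigenvalues of `L` on the subspace orthogonal to `𝟏`, the uniform
edge weight `q* = 2/(a+b)` minimizes `‖I − q·L − J‖₂` over all `q`, and the optimal
value equals `(b−a)/(b+a) < 1`, so the resulting averaging matrix guarantees
convergence of the averaging consensus. -/
theorem stmt8 {n : ℕ} (hn : 2 ≤ n) (G : SimpleGraph (Fin n)) [DecidableRel G.Adj]
    (hG : G.Connected)
    (L : Matrix (Fin n) (Fin n) ℝ) (hL : L = G.lapMatrix ℝ)
    (J : Matrix (Fin n) (Fin n) ℝ) (hJ : ∀ i j, J i j = 1 / n)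
    (S : Set ℝ)
    (hS : S = { μ : ℝ | ∃ v : Fin n → ℝ, v ≠ 0 ∧ (∑ i, v i) = 0 ∧ L *ᵥ v = μ • v })
    (a b qstar : ℝ) (ha : a = sInf S) (hb : b = sSup S) (hq : qstar = 2 / (a + b)) :
    (∀ q : ℝ, specNorm (1 - qstar • L - J) ≤ specNorm (1 - q • L - J)) ∧
    specNorm (1 - qstar • L - J) = (b - a) / (b + a) ∧
    (b - a) / (b + a) < 1 := by
  have hn0 : (n : ℝ) ≠ 0 := by positivity
  have hLH : Lᵀ = L := by rw [hL]; exact SimpleGraph.isSymm_lapMatrix (R := ℝ) G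
  have hL1 : L *ᵥ (fun _ => (1 : ℝ)) = 0 := by
    rw [hL]; exact G.lapMatrix_mulVec_const_eq_zero
  have hJv : ∀ v : Fin n → ℝ, J *ᵥ v = fun _ => (∑ i, v i) / n := by
    intro v
    ext i
    simp only [mulVec, dotProduct, hJ, ← Finset.mul_sum]
    ring
  have hMv : ∀ (q : ℝ) (v : Fin n → ℝ), (1 - q • L - J) *ᵥ v = v - q • (L *ᵥ v) - J *ᵥ v := by
    intro q v
    rw [sub_mulVec, sub_mulVec, one_mulVec, smul_mulVec]
  have hMT : ∀ q : ℝ, (1 - q • L - J)ᵀ = 1 - q • L - J := by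
    intro q
    have : Jᵀ = J := by ext i j; simp [hJ]
    rw [transpose_sub, transpose_sub, transpose_smul, hLH, this, transpose_one]
  have hMH : ∀ q : ℝ, (1 - q • L - J).IsHermitian := by
    intro q
    rw [Matrix.IsHermitian, conjTranspose_eq_transpose_of_trivial]
    exact hMT q
  have hM1 : ∀ q : ℝ, (1 - q • L - J) *ᵥ (fun _ => (1 : ℝ)) = 0 := by
    intro q
    rw [hMv, hL1, hJv]
    ext i
    simp [hn0]
  have hlow : ∀ q, ∀ μ ∈ S, |1 - q * μ| ≤ specNorm (1 - q • L - J) := by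
    intro q μ hμ
    rw [hS] at hμ
    obtain ⟨v, hv, hs, he⟩ := hμ
    refine aux_lower _ _ v hv ?_
    rw [hMv, he, hJv, hs]
    ext i
    simp
    ring
  have hup : ∀ q C : ℝ, q ≠ 0 → 0 ≤ C → (∀ μ ∈ S, |1 - q * μ| ≤ C) →
      specNorm (1 - q • L - J) ≤ C := by
    intro q C hq0 hC h
    refine aux_upper _ (hMH q) C hC fun l w hw he => ?_
    by_cases hl : l = 0
    · simpa [hl] using hC
    have hs : ∑ i, w i = 0 := by
      have h1 : (fun _ => (1 : ℝ)) ⬝ᵥ ((1 - q • L - J) *ᵥ w) = 0 := by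
        rw [dotProduct_mulVec, ← mulVec_transpose, hMT, hM1, zero_dotProduct]
      rw [he, dotProduct_smul, smul_eq_mul] at h1
      have h2 := (mul_eq_zero.1 h1).resolve_left hl
      simpa [dotProduct] using h2
    have hμ : (1 - l) / q ∈ S := by
      rw [hS]
      refine ⟨w, hw, hs, ?_⟩
      rw [hMv, hJv, hs] at he
      ext i
      have := congrFun he i
      simp at this ⊢
      field_simp
      linarith
    have := h _ hμ
    rwa [mul_div_cancel₀ _ hq0, sub_sub_cancel] at this
  have hne : S.Nonempty := by
    by_contra hemp
    rw [Set.not_nonempty_iff_eq_empty] at hemp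
    have h0 := hup 1 0 one_ne_zero le_rfl (by simp [hemp])
    let v : Fin n → ℝ := Pi.single ⟨0, by omega⟩ 1 - Pi.single ⟨1, by omega⟩ 1
    have hv : v ≠ 0 := by
      intro hv
      have := congrFun hv ⟨0, by omega⟩
      simp [v, Pi.single_apply] at this
    have hs : ∑ i, v i = 0 := by simp [v]
    have hM0 : (1 - (1 : ℝ) • L - J) = 0 := by
      have : Matrix.toEuclideanCLM (𝕜 := ℝ) (1 - (1 : ℝ) • L - J) = 0 := norm_le_zero_iff.1 h0
      exact (map_eq_zero_iff _ (Matrix.toEuclideanCLM (n := Fin n) (𝕜 := ℝ)).injective).1 this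
    have h1 : (1 : ℝ) ∈ S := by
      rw [hS]
      refine ⟨v, hv, hs, ?_⟩
      have h2 := hMv 1 v
      rw [hM0, hJv, hs, zero_mulVec] at h2
      ext i
      have := congrFun h2 i
      simp at this ⊢
      linarith
    simp [hemp] at h1
  have hfin : S.Finite := by
    refine (Module.End.finite_hasEigenvalue (Matrix.toLin' L)).subset ?_
    intro μ hμ
    rw [hS] at hμ
    obtain ⟨v, hv, hs, he⟩ := hμ
    exact Module.End.hasEigenvalue_of_hasEigenvector (x := v)
      ⟨Module.End.mem_eigenspace_iff.2 (by simpa using he), hv⟩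
  have hpos : ∀ μ ∈ S, 0 < μ := by
    intro μ hμ
    rw [hS] at hμ
    obtain ⟨v, hv, hs, he⟩ := hμ
    have hps := (G.posSemidef_lapMatrix ℝ).dotProduct_mulVec_nonneg v
    rw [← hL, he, star_trivial, dotProduct_smul, smul_eq_mul] at hps
    have hvv : 0 < v ⬝ᵥ v := by
      have h1 : 0 ≤ v ⬝ᵥ v := Finset.sum_nonneg fun i _ => mul_self_nonneg (v i)
      exact lt_of_le_of_ne h1 fun h => hv (dotProduct_self_eq_zero.1 h.symm)
    refine lt_of_le_of_ne (nonneg_of_mul_nonneg_left hps hvv) ?_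
    rintro rfl
    rw [zero_smul, hL, G.lapMatrix_mulVec_eq_zero_iff_forall_reachable] at he
    apply hv
    ext i
    have h1 : ∑ j, v j = ∑ j : Fin n, v i := Finset.sum_congr rfl fun j _ => he j i (hG.preconnected j i)
    rw [hs] at h1
    simp at h1
    rcases h1 with h1 | h1
    · omega
    · simpa using h1
  have haS : a ∈ S := ha ▸ hne.csInf_mem hfin
  have hbS : b ∈ S := hb ▸ hne.csSup_mem hfin
  have hale : ∀ μ ∈ S, a ≤ μ := fun μ h => ha ▸ csInf_le hfin.bddBelow h
  have hbge : ∀ μ ∈ S, μ ≤ b := fun μ h => hb ▸ le_csSup hfin.bddAbove h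
  have ha0 := hpos a haS
  have hb0 := hpos b hbS
  have hab := hale b hbS
  have hC : 0 ≤ (b - a) / (b + a) := div_nonneg (by linarith) (by linarith)
  have hupper : specNorm (1 - qstar • L - J) ≤ (b - a) / (b + a) := by
    refine hup _ _ (by rw [hq]; positivity) hC fun μ hμ => ?_
    have h1 := hale μ hμ
    have h2 := hbge μ hμ
    have e : 1 - qstar * μ = (b + a - 2 * μ) / (b + a) := by
      rw [hq]; field_simp; ring
    rw [e, abs_div, abs_of_pos (show 0 < b + a by linarith)]
    gcongr
    rw [abs_le]
    constructor <;> linarith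
  have hlower : ∀ q : ℝ, (b - a) / (b + a) ≤ specNorm (1 - q • L - J) := by
    intro q
    have h1 := (le_abs_self _).trans (hlow q a haS)
    have h2 := (neg_le_abs _).trans (hlow q b hbS)
    rw [div_le_iff₀ (by linarith)]
    nlinarith
  refine ⟨fun q => hupper.trans (hlower q), le_antisymm hupper (hlower _), ?_⟩
  rw [div_lt_one (by linarith)]
  linarith
end

section
/- Let n ≥ 1 and let W ∈ ℝ^{n×n} be symmetric with all entries nonnegative, W·𝟏 = 𝟏, and W i i > 0 for every i. Suppose the simple graph on Fin n with adjacency relation 'i ≠ j and W i j ≠ 0' is connected. Then ‖W − J‖₂ < 1, where J is the n×n matrix with all entries 1/n. In particular, the Metropolis weight matrix of a connected graph guarantees convergence of the averaging consensus protocol. -/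
open Matrix

theorem stmt11_key {n : ℕ} (hn : 1 ≤ n) (W : Matrix (Fin n) (Fin n) ℝ)
    (hsym : Wᵀ = W)
    (hnonneg : ∀ i j, 0 ≤ W i j)
    (h1 : W *ᵥ (fun _ => (1 : ℝ)) = (fun _ => (1 : ℝ)))
    (hdiag : ∀ i, 0 < W i i)
    (G : SimpleGraph (Fin n)) (hG : ∀ i j, G.Adj i j ↔ i ≠ j ∧ W i j ≠ 0)
    (hconn : G.Connected)
    (J : Matrix (Fin n) (Fin n) ℝ) (hJ : ∀ i j, J i j = 1 / n)
    (x : Fin n → ℝ) (hx : x ≠ 0) :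
    ∑ i, ((W - J) *ᵥ x) i ^ 2 < ∑ i, x i ^ 2 := by
  have hn0 : (n : ℝ) ≠ 0 := by positivity
  have hnpos : (0 : ℝ) < n := by positivity
  have hrow : ∀ i, ∑ j, W i j = 1 := fun i => by
    have := congrFun h1 i
    simpa [Matrix.mulVec, dotProduct] using this
  have hcol : ∀ j, ∑ i, W i j = 1 := fun j => by
    rw [← hrow j]
    refine Finset.sum_congr rfl fun i _ => ?_
    exact congrFun (congrFun hsym j) i
  obtain ⟨m, hm⟩ : ∃ m : ℝ, m = (∑ i, x i) / n := ⟨_, rfl⟩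
  have hsum : ∑ i, x i = n * m := by rw [hm]; field_simp
  obtain ⟨y, hy⟩ : ∃ y : Fin n → ℝ, ∀ i, y i = x i - m := ⟨fun i => x i - m, fun _ => rfl⟩
  obtain ⟨z, hz⟩ : ∃ z : Fin n → ℝ, z = (W - J) *ᵥ x := ⟨_, rfl⟩
  have hzi : ∀ i, z i = ∑ j, W i j * y j := fun i => by
    have : z i = ∑ j, W i j * x j - (∑ j, x j) / n := by
      rw [hz]
      simp only [Matrix.mulVec, dotProduct, Matrix.sub_apply, hJ, sub_mul,
        Finset.sum_sub_distrib, ← Finset.mul_sum]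
      ring
    rw [this, ← hm]
    simp only [hy, mul_sub, Finset.sum_sub_distrib, ← Finset.sum_mul, hrow, one_mul]
  have hloc : ∀ i, ∑ j, W i j * (y j - z i) ^ 2 = ∑ j, W i j * y j ^ 2 - z i ^ 2 := fun i => by
    have : ∀ j, W i j * (y j - z i) ^ 2
        = W i j * y j ^ 2 - 2 * z i * (W i j * y j) + z i ^ 2 * W i j := fun j => by ring
    simp only [this, Finset.sum_add_distrib, Finset.sum_sub_distrib, ← Finset.mul_sum, hrow,
      ← hzi]
    ring
  have hyy : ∑ j, y j ^ 2 = ∑ j, x j ^ 2 - n * m ^ 2 := by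
    have : ∀ j, y j ^ 2 = x j ^ 2 - 2 * m * x j + m ^ 2 := fun j => by rw [hy]; ring
    simp only [this, Finset.sum_add_distrib, Finset.sum_sub_distrib, ← Finset.mul_sum, hsum]
    simp
    ring
  have htot : ∑ i, ∑ j, W i j * (y j - z i) ^ 2 = ∑ j, x j ^ 2 - n * m ^ 2 - ∑ i, z i ^ 2 := by
    simp only [hloc, Finset.sum_sub_distrib]
    rw [Finset.sum_comm]
    simp only [← Finset.sum_mul, hcol, one_mul, hyy]
  rw [← hz]
  have hD : ∀ i j, 0 ≤ W i j * (y j - z i) ^ 2 := fun i j =>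
    mul_nonneg (hnonneg i j) (sq_nonneg _)
  have hDs : 0 ≤ ∑ i, ∑ j, W i j * (y j - z i) ^ 2 :=
    Finset.sum_nonneg fun i _ => Finset.sum_nonneg fun j _ => hD i j
  have hnm : 0 ≤ n * m ^ 2 := by positivity
  by_contra hcon
  push Not at hcon
  have hS0 : ∑ i, ∑ j, W i j * (y j - z i) ^ 2 = 0 := by linarith
  have hm2 : n * m ^ 2 = 0 := by linarith
  have hm0 : m = 0 := by simpa [hn0] using hm2
  have hij : ∀ i j, W i j ≠ 0 → y j = z i := fun i j hW => by
    have e1 := (Finset.sum_eq_zero_iff_of_nonneg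
      (fun i _ => Finset.sum_nonneg fun j _ => hD i j)).1 hS0 i (Finset.mem_univ _)
    have e2 := (Finset.sum_eq_zero_iff_of_nonneg (fun j _ => hD i j)).1 e1 j (Finset.mem_univ _)
    have e3 : y j - z i = 0 := by simpa [hW] using e2
    linarith
  have hadj : ∀ i j, G.Adj i j → y i = y j := fun i j h => by
    rw [hij i i (hdiag i).ne', hij i j ((hG i j).1 h).2]
  have hall : ∀ i j, y i = y j := fun i j => by
    obtain ⟨w⟩ := hconn.preconnected i j
    induction w with
    | nil => rfl
    | cons h _ ih => exact (hadj _ _ h).trans ih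
  apply hx
  funext i
  have hxi : ∀ j, x j = x i := fun j => by
    have := hall j i
    rw [hy, hy] at this
    linarith
  have : (n : ℝ) * x i = 0 := by
    rw [hm0, mul_zero, Finset.sum_congr rfl (fun j _ => hxi j)] at hsum
    simpa using hsum
  simpa [hn0] using this

/-- a symmetric doubly stochastic matrix with positive diagonal whose
support graph (adjacency `i ≠ j ∧ W i j ≠ 0`) is connected satisfies `‖W − J‖₂ < 1`,
hence guarantees convergence of the averaging consensus protocol. -/
theorem stmt11 {n : ℕ} (hn : 1 ≤ n) (W : Matrix (Fin n) (Fin n) ℝ)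
    (hsym : Wᵀ = W)
    (hnonneg : ∀ i j, 0 ≤ W i j)
    (h1 : W *ᵥ (fun _ => (1 : ℝ)) = (fun _ => (1 : ℝ)))
    (hdiag : ∀ i, 0 < W i i)
    (G : SimpleGraph (Fin n)) (hG : ∀ i j, G.Adj i j ↔ i ≠ j ∧ W i j ≠ 0)
    (hconn : G.Connected)
    (J : Matrix (Fin n) (Fin n) ℝ) (hJ : ∀ i j, J i j = 1 / n) :
    specNorm (W - J) < 1 := by
  unfold specNorm
  set T := Matrix.toEuclideanCLM (𝕜 := ℝ) (W - J) with hT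
  have hlt : ∀ v : EuclideanSpace ℝ (Fin n), v ≠ 0 → ‖T v‖ < ‖v‖ := fun v hv => by
    have hv' : (v.ofLp : Fin n → ℝ) ≠ 0 := fun h => hv (by ext i; exact congrFun h i)
    have := stmt11_key hn W hsym hnonneg h1 hdiag G hG hconn J hJ v.ofLp hv'
    rw [EuclideanSpace.norm_eq, EuclideanSpace.norm_eq]
    apply Real.sqrt_lt_sqrt (Finset.sum_nonneg fun _ _ => sq_nonneg _)
    simpa [hT, Matrix.ofLp_toEuclideanCLM, Matrix.sub_mulVec] using this
  obtain ⟨v, hv, hmax⟩ := (isCompact_closedBall (0 : EuclideanSpace ℝ (Fin n)) 1).exists_isMaxOn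
    ⟨0, by simp⟩ (T.continuous.norm.continuousOn)
  have hv1 : ‖T v‖ < 1 := by
    by_cases h0 : v = 0
    · simp [h0]
    · exact (hlt v h0).trans_le (by simpa using hv)
  refine lt_of_le_of_lt ?_ hv1
  refine ContinuousLinearMap.opNorm_le_of_unit_norm (norm_nonneg _) fun u hu => ?_
  exact hmax (by simp [hu])
end
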